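/- arXiv:1512.05752 — 2 statements merged into one kernel-verified Lean document; each statement's English description precedes it below -/
import Mathlib

section
/- Let L be a finite-dimensional solvable Leibniz algebra over a field F with φ(L) = 0 which is minimally non-supersolvable and is not a Lie algebra, write L = A + H with A the unique minimal ideal (A = Leib(L)) and H a complementing Lie subalgebra, and let C be the companion Lie algebra on the vector space A ⊕ H with product [a+h, b+k] = hb − ka + hk. Then C is a solvable Lie algebra with φ(C) = 0, C is not supersolvable, and every proper subalgebra of C is supersolvable (so C is minimally non-supersolvable). -/
/-!
Basic theory of (left) Leibniz algebras, formalized over an arbitrary field `F`.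
A Leibniz algebra structure on an `F`-vector space `L` is given by a bilinear
multiplication `m : L →ₗ[F] L →ₗ[F] L` satisfying the left Leibniz identity.
-/

open Submodule Module

section LeibnizDefs

variable {F : Type*} [Field F] {L : Type*} [AddCommGroup L] [Module F L]
variable (m : L →ₗ[F] L →ₗ[F] L)

/-- The left Leibniz identity: `a(bc) = (ab)c + b(ac)`. -/
def IsLeibniz : Prop :=
  ∀ a b c : L, m a (m b c) = m (m a b) c + m b (m a c)

/-- The multiplication is antisymmetric, i.e. the algebra is a Lie algebra. -/
def IsLie : Prop := ∀ a b : L, m a b = - m b a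

/-- The product of two subspaces: the span of all products `x·y`, `x ∈ P`, `y ∈ Q`. -/
abbrev mprod (P Q : Submodule F L) : Submodule F L := Submodule.map₂ m P Q

/-- A subalgebra: a subspace closed under multiplication. -/
def IsSubalg (S : Submodule F L) : Prop := ∀ x ∈ S, ∀ y ∈ S, m x y ∈ S

/-- An ideal of `L`: a subspace `I` with `L·I ⊆ I` and `I·L ⊆ I`. -/
def IsIdeal (I : Submodule F L) : Prop :=
  ∀ (x : L), ∀ y ∈ I, m x y ∈ I ∧ m y x ∈ I

/-- An ideal `I` of a subalgebra `S`. -/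
def IsIdealOf (S I : Submodule F L) : Prop :=
  I ≤ S ∧ ∀ x ∈ S, ∀ y ∈ I, m x y ∈ I ∧ m y x ∈ I

/-- A minimal ideal: a nonzero ideal containing no nonzero proper subideal of `L`. -/
def IsMinIdeal (A : Submodule F L) : Prop :=
  IsIdeal m A ∧ A ≠ ⊥ ∧ ∀ J, IsIdeal m J → J ≤ A → J = ⊥ ∨ J = A

/-- The derived series of a subspace: `S^(0) = S`, `S^(n+1) = S^(n)·S^(n)`. -/
def derSeries (S : Submodule F L) : ℕ → Submodule F L
  | 0 => S
  | n + 1 => mprod m (derSeries S n) (derSeries S n)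

/-- A subalgebra is solvable if its derived series reaches `0`. -/
def IsSolvableSub (S : Submodule F L) : Prop := ∃ n, derSeries m S n = ⊥

/-- The Leibniz algebra `L` is solvable. -/
abbrev IsSolvableAlg : Prop := IsSolvableSub m (⊤ : Submodule F L)

/-- The lower central series of a subspace: `N^1 = N`, `N^(k+1) = N·N^k`. -/
def lcSeries (N : Submodule F L) : ℕ → Submodule F L
  | 0 => N
  | k + 1 => mprod m N (lcSeries N k)

/-- A subalgebra is nilpotent if its lower central series reaches `0`. -/
def IsNilpotentSub (N : Submodule F L) : Prop := ∃ k, lcSeries m N k = ⊥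

/-- A subalgebra `S` is strongly solvable if `S² = S·S` is nilpotent. -/
def IsStronglySolvable (S : Submodule F L) : Prop :=
  IsNilpotentSub m (mprod m S S)

/-- A maximal subalgebra: a proper subalgebra not contained in any larger proper
subalgebra. -/
def IsMaxSubalg (S : Submodule F L) : Prop :=
  IsSubalg m S ∧ S ≠ ⊤ ∧ ∀ T, IsSubalg m T → S ≤ T → T = S ∨ T = ⊤

/-- The Frattini subalgebra `F(L)`: the intersection of all maximal subalgebras. -/
def frattiniSub : Submodule F L := sInf {S | IsMaxSubalg m S}

/-- The Frattini ideal `φ(L)`: the largest ideal contained in the Frattini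
subalgebra. -/
def frattiniIdeal : Submodule F L :=
  sSup {I | IsIdeal m I ∧ I ≤ frattiniSub m}

/-- `Leib(L)`: the span of all squares `x·x`. -/
def leibIdeal : Submodule F L := Submodule.span F {z | ∃ x : L, z = m x x}

/-- The subalgebra generated by a set. -/
def genBy (s : Set L) : Submodule F L := sInf {S | IsSubalg m S ∧ s ⊆ S}

/-- A subalgebra is two-generated if it is generated as an algebra by two elements. -/
def TwoGenerated (S : Submodule F L) : Prop := ∃ x y : L, genBy m {x, y} = S

/-- A subalgebra `S` is supersolvable if there is a chain of ideals of `S`,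
`0 = S₀ ⊂ S₁ ⊂ ⋯ ⊂ Sₙ = S`, with `dim Sᵢ = i`. -/
def IsSupersolvable (S : Submodule F L) : Prop :=
  ∃ (n : ℕ) (c : ℕ → Submodule F L), c 0 = ⊥ ∧ c n = S ∧
    (∀ i, i < n → c i ≤ c (i + 1)) ∧
    (∀ i, i ≤ n → IsIdealOf m S (c i)) ∧
    (∀ i, i ≤ n → Module.finrank F (c i) = i)

/-- A subspace `S` is nil on `L` if left multiplication by each of its elements is a
nilpotent operator. -/
def IsNilOn (S : Submodule F L) : Prop :=
  ∀ x ∈ S, IsNilpotent (m x : Module.End F L)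

open scoped TensorProduct in
/-- A subspace `S` is triangulable on `L` if, after extending scalars to the algebraic
closure `K` of `F`, the space `K ⊗ L` admits a basis with respect to which the left
multiplication operators by all elements of `K ⊗ S` are upper triangular matrices.
(Since upper triangular matrices form a `K`-subspace of matrices, it suffices that the
base-changed left multiplication by each `x ∈ S` is upper triangular.) -/
def IsTriangulableOn (S : Submodule F L) : Prop :=
  ∃ (n : ℕ) (b : Basis (Fin n) (AlgebraicClosure F) ((AlgebraicClosure F) ⊗[F] L)),
    ∀ x ∈ S, ∀ i j : Fin n, j < i →
      LinearMap.toMatrix b b (LinearMap.baseChange (AlgebraicClosure F) (m x)) i j = 0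

end LeibnizDefs

/-!
Since `A · L = 0`, the products of `L` and of its companion `C` agree modulo `A`, and a subspace
of `A` is an ideal of one exactly when it is an ideal of the other. Hence, for a subspace `T`
containing `A`, a chain `cᵢ` of ideals of `T` in one algebra yields the chain of the `cᵢ ∩ A`
followed by the `cᵢ + A` in the other, so `T` is supersolvable in `L` iff it is in `C`.
A proper subalgebra `S` of `C` either satisfies `S + A ≠ L`, and then lies in the supersolvable
`S + A`, or, by minimality of `A`, is a complement of `A`, and then is isomorphic to
`C / A ≅ H`. Finally `H` is a maximal subalgebra of `C`, and an ideal of `C` inside `H`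
annihilates `A`, so it is an ideal of `L` that does not contain `A`, hence `0`.
-/

section Leibniz

variable {F : Type*} [Field F] {L : Type*} [AddCommGroup L] [Module F L]
variable {m m₁ m₂ : L →ₗ[F] L →ₗ[F] L} {A B I J S T U V : Submodule F L}

theorem mul_eq_zero_of_mem_leibIdeal (hm : IsLeibniz m) {a : L} (ha : a ∈ leibIdeal m) :
    m a = 0 := by
  have hle : leibIdeal m ≤ LinearMap.ker m := by
    refine span_le.2 ?_
    rintro _ ⟨y, rfl⟩
    refine LinearMap.mem_ker.2 (LinearMap.ext fun x => ?_)
    simpa using hm y y x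
  exact LinearMap.mem_ker.1 (hle ha)

/-! ### Ideals and subalgebras -/

theorem isIdealOf_bot : IsIdealOf m S ⊥ :=
  ⟨bot_le, by simp⟩

theorem isIdealOf_top_iff : IsIdealOf m ⊤ I ↔ IsIdeal m I := by
  simp [IsIdealOf, IsIdeal]

theorem IsIdeal.isIdealOf (hI : IsIdeal m I) (hIS : I ≤ S) : IsIdealOf m S I :=
  ⟨hIS, fun x _ => hI x⟩

theorem IsIdealOf.inf (hI : IsIdealOf m S I) (hJ : IsIdealOf m S J) : IsIdealOf m S (I ⊓ J) :=
  ⟨inf_le_left.trans hI.1, fun x hx y hy =>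
    ⟨⟨(hI.2 x hx y hy.1).1, (hJ.2 x hx y hy.2).1⟩, ⟨(hI.2 x hx y hy.1).2, (hJ.2 x hx y hy.2).2⟩⟩⟩

theorem IsIdealOf.inf_subalg (hJ : IsIdealOf m S J) (hT : IsSubalg m T) (hTS : T ≤ S) :
    IsIdealOf m T (J ⊓ T) :=
  ⟨inf_le_right, fun x hx y hy =>
    ⟨⟨(hJ.2 x (hTS hx) y hy.1).1, hT x hx y hy.2⟩, ⟨(hJ.2 x (hTS hx) y hy.1).2, hT y hy.2 x hx⟩⟩⟩

theorem mem_sup_of_smodEq {R M : Type*} [Ring R] [AddCommGroup M] [Module R M]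
    {A J : Submodule R M} {x y : M} (hxy : x ≡ y [SMOD A]) (hx : x ∈ J) : y ∈ J ⊔ A := by
  rw [← add_sub_cancel x y]
  exact add_mem_sup hx (SModEq.sub_mem.1 hxy.symm)

theorem IsIdealOf.sup_of_smodEq (hJ : IsIdealOf m₁ S J) (hA : IsIdealOf m₂ (S ⊔ A) A)
    (hmod : ∀ x ∈ S, ∀ y ∈ S, m₁ x y ≡ m₂ x y [SMOD A]) : IsIdealOf m₂ (S ⊔ A) (J ⊔ A) := by
  refine ⟨sup_le_sup_right hJ.1 A, fun x hx y hy => ?_⟩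
  obtain ⟨j, hj, b, hb, rfl⟩ := mem_sup.1 hy
  obtain ⟨s, hs, a, ha, rfl⟩ := mem_sup.1 hx
  have hjS := hJ.1 hj
  have hjSA : j ∈ S ⊔ A := mem_sup_left hjS
  have hleft : m₂ s j ∈ J ⊔ A := mem_sup_of_smodEq (hmod s hs j hjS) (hJ.2 s hs j hj).1
  have hright : m₂ j s ∈ J ⊔ A := mem_sup_of_smodEq (hmod j hjS s hs) (hJ.2 s hs j hj).2
  constructor
  · rw [map_add (m₂ (s + a)), LinearMap.map_add₂ m₂ s a j]
    exact add_mem (add_mem hleft (mem_sup_right (hA.2 j hjSA a ha).2))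
      (mem_sup_right (hA.2 _ hx b hb).1)
  · rw [LinearMap.map_add₂ m₂ j b, map_add (m₂ j)]
    exact add_mem (add_mem hright (mem_sup_right (hA.2 j hjSA a ha).1))
      (mem_sup_right (hA.2 _ hx b hb).2)

theorem IsSubalg.sup_ideal (hS : IsSubalg m S) (hA : IsIdeal m A) : IsSubalg m (S ⊔ A) := by
  have hideal : IsIdealOf m (S ⊔ A) (S ⊔ A) :=
    IsIdealOf.sup_of_smodEq ⟨le_rfl, fun x hx y hy => ⟨hS x hx y hy, hS y hy x hx⟩⟩
      (hA.isIdealOf le_sup_right) fun _ _ _ _ => SModEq.rfl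
  exact fun x hx y hy => (hideal.2 x hx y hy).1

theorem IsSubalg.of_smodEq (hS : IsSubalg m₁ S) (hAS : A ≤ S)
    (hmod : ∀ x ∈ S, ∀ y ∈ S, m₁ x y ≡ m₂ x y [SMOD A]) : IsSubalg m₂ S := by
  intro x hx y hy
  rw [← sup_eq_left.2 hAS]
  exact mem_sup_of_smodEq (hmod x hx y hy) (hS x hx y hy)

/-! ### Solvability -/

theorem derSeries_mono (hST : S ≤ T) : ∀ n, derSeries m S n ≤ derSeries m T n
  | 0 => hST
  | n + 1 => map₂_le_map₂ (derSeries_mono hST n) (derSeries_mono hST n)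

theorem derSeries_add (n : ℕ) :
    ∀ k, derSeries m S (n + k) = derSeries m (derSeries m S n) k
  | 0 => rfl
  | k + 1 => congrArg (fun D => mprod m D D) (derSeries_add n k)

theorem derSeries_le_sup_of_smodEq (hA : IsIdeal m₂ A)
    (hmod : ∀ x y, m₁ x y ≡ m₂ x y [SMOD A]) :
    ∀ n, derSeries m₂ S n ≤ derSeries m₁ S n ⊔ A
  | 0 => le_sup_left
  | n + 1 => by
    refine map₂_le.2 fun x hx y hy => ?_
    obtain ⟨d, hd, a, ha, rfl⟩ := mem_sup.1 (derSeries_le_sup_of_smodEq hA hmod n hx)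
    obtain ⟨e, he, b, hb, rfl⟩ := mem_sup.1 (derSeries_le_sup_of_smodEq hA hmod n hy)
    rw [map_add (m₂ (d + a)), LinearMap.map_add₂ m₂ d a e]
    exact add_mem (add_mem (mem_sup_of_smodEq (hmod d e) (apply_mem_map₂ m₁ hd he))
      (mem_sup_right (hA e a ha).2)) (mem_sup_right (hA _ b hb).1)

theorem IsSolvableSub.of_smodEq (hS : IsSolvableSub m₁ S) (hA : IsIdeal m₂ A)
    (hAsolv : IsSolvableSub m₂ A) (hmod : ∀ x y, m₁ x y ≡ m₂ x y [SMOD A]) :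
    IsSolvableSub m₂ S := by
  obtain ⟨n, hn⟩ := hS
  obtain ⟨k, hk⟩ := hAsolv
  have hle : derSeries m₂ S n ≤ A := by
    simpa [hn] using derSeries_le_sup_of_smodEq (S := S) hA hmod n
  refine ⟨n + k, eq_bot_iff.2 ?_⟩
  rw [derSeries_add, ← hk]
  exact derSeries_mono hle k

/-! ### Supersolvability -/

section Supersolvable

open Relation (ReflTransGen)

/-- One step of a chain of ideals of `S`: from `U` to an ideal `V ⊇ U` of `S` whose dimension is
larger by at most one. Steps with `U = V` are allowed, so that steps persist when both ends are
intersected with, or added to, a fixed subspace. -/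
def IsIdealStep (m : L →ₗ[F] L →ₗ[F] L) (S U V : Submodule F L) : Prop :=
  U ≤ V ∧ finrank F V ≤ finrank F U + 1 ∧ IsIdealOf m S V

/-- The condition of `IsSupersolvable`, with the top `V` of the flag of ideals of `S` allowed to
differ from `S`. -/
def HasIdealFlag (m : L →ₗ[F] L →ₗ[F] L) (S V : Submodule F L) : Prop :=
  ∃ (n : ℕ) (c : ℕ → Submodule F L), c 0 = ⊥ ∧ c n = V ∧
    (∀ i, i < n → c i ≤ c (i + 1)) ∧
    (∀ i, i ≤ n → IsIdealOf m S (c i)) ∧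
    (∀ i, i ≤ n → finrank F (c i) = i)

theorem HasIdealFlag.reflTransGen (h : HasIdealFlag m S V) :
    ReflTransGen (IsIdealStep m S) ⊥ V := by
  obtain ⟨n, c, h0, rfl, hle, hideal, hdim⟩ := h
  have hstep : ∀ i ∈ Set.Ico 0 n, IsIdealStep m S (c i) (c (i + 1)) := fun i hi =>
    ⟨hle i hi.2, by rw [hdim i hi.2.le, hdim (i + 1) hi.2], hideal (i + 1) hi.2⟩
  rw [← h0]
  exact (reflTransGen_of_succ_of_le (fun i j => IsIdealStep m S (c i) (c j)) hstep n.zero_le).lift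
    c le_rfl

theorem hasIdealFlag_bot : HasIdealFlag m S ⊥ :=
  ⟨0, fun _ => ⊥, rfl, rfl, fun _ _ => le_rfl, fun _ _ => isIdealOf_bot, by simp⟩

variable [FiniteDimensional F L]

theorem HasIdealFlag.tail (h : HasIdealFlag m S U) (hUV : IsIdealStep m S U V) :
    HasIdealFlag m S V := by
  obtain ⟨hle, hdim, hV⟩ := hUV
  obtain rfl | hlt := hle.eq_or_lt
  · exact h
  obtain ⟨n, c, h0, rfl, hc, hideal, hfin⟩ := h
  have hVdim : finrank F V = n + 1 := by
    have := finrank_lt_finrank_of_lt hlt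
    have := hfin n le_rfl
    omega
  refine ⟨n + 1, Function.update c (n + 1) V, by simp [h0], by simp, fun i hi => ?_,
    fun i hi => ?_, fun i hi => ?_⟩
  · rw [Function.update_of_ne hi.ne]
    obtain rfl | hin := (Nat.lt_succ_iff.1 hi).eq_or_lt
    · simpa using hle
    · rw [Function.update_of_ne (by omega)]
      exact hc i hin
  · obtain rfl | hin := hi.eq_or_lt
    · simpa using hV
    · rw [Function.update_of_ne hin.ne]
      exact hideal i (Nat.lt_succ_iff.1 hin)
  · obtain rfl | hin := hi.eq_or_lt
    · rw [Function.update_self, hVdim]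
    · rw [Function.update_of_ne hin.ne]
      exact hfin i (Nat.lt_succ_iff.1 hin)

theorem hasIdealFlag_iff_reflTransGen :
    HasIdealFlag m S V ↔ ReflTransGen (IsIdealStep m S) ⊥ V := by
  refine ⟨HasIdealFlag.reflTransGen, fun h => ?_⟩
  induction h with
  | refl => exact hasIdealFlag_bot
  | tail _ hUV ih => exact ih.tail hUV

theorem isSupersolvable_iff_reflTransGen :
    IsSupersolvable m S ↔ ReflTransGen (IsIdealStep m S) ⊥ S :=
  hasIdealFlag_iff_reflTransGen

theorem reflTransGen_isIdealStep_inf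
    (hB : ∀ J, IsIdealOf m₁ S J → IsIdealOf m₂ T (J ⊓ B))
    (h : ReflTransGen (IsIdealStep m₁ S) U V) :
    ReflTransGen (IsIdealStep m₂ T) (U ⊓ B) (V ⊓ B) := by
  refine ReflTransGen.lift (· ⊓ B) ?_ _ _ h
  rintro P Q ⟨hPQ, hdim, hQ⟩
  refine ⟨inf_le_inf_right B hPQ, ?_, hB Q hQ⟩
  have hP_add := finrank_sup_add_finrank_inf_eq P B
  have hQ_add := finrank_sup_add_finrank_inf_eq Q B
  have hsup := finrank_mono (sup_le_sup_right hPQ B)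
  dsimp only
  omega

theorem reflTransGen_isIdealStep_sup
    (hB : ∀ J, IsIdealOf m₁ S J → IsIdealOf m₂ T (J ⊔ B))
    (h : ReflTransGen (IsIdealStep m₁ S) U V) :
    ReflTransGen (IsIdealStep m₂ T) (U ⊔ B) (V ⊔ B) := by
  refine ReflTransGen.lift (· ⊔ B) ?_ _ _ h
  rintro P Q ⟨hPQ, hdim, hQ⟩
  refine ⟨sup_le_sup_right hPQ B, ?_, hB Q hQ⟩
  have hP_add := finrank_sup_add_finrank_inf_eq P B
  have hQ_add := finrank_sup_add_finrank_inf_eq Q B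
  have hinf := finrank_mono (inf_le_inf_right B hPQ)
  dsimp only
  omega

theorem IsSupersolvable.mono (hS : IsSupersolvable m S) (hT : IsSubalg m T) (hTS : T ≤ S) :
    IsSupersolvable m T := by
  rw [isSupersolvable_iff_reflTransGen] at hS ⊢
  simpa [hTS] using
    reflTransGen_isIdealStep_inf (m₂ := m) (B := T) (fun _ hJ => hJ.inf_subalg hT hTS) hS

theorem IsSupersolvable.of_smodEq (hT : IsSupersolvable m₁ T) (hA : IsIdealOf m₁ T A)
    (hsub : ∀ J ≤ A, IsIdealOf m₁ T J → IsIdealOf m₂ T J)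
    (hmod : ∀ x ∈ T, ∀ y ∈ T, m₁ x y ≡ m₂ x y [SMOD A]) : IsSupersolvable m₂ T := by
  have hTA : T ⊔ A = T := sup_eq_left.2 hA.1
  have hA₂ : IsIdealOf m₂ (T ⊔ A) A := hTA.symm ▸ hsub A le_rfl hA
  rw [isSupersolvable_iff_reflTransGen] at hT ⊢
  have hlow := reflTransGen_isIdealStep_inf (B := A)
    (fun J hJ => hsub (J ⊓ A) inf_le_right (hJ.inf hA)) hT
  have hhigh := reflTransGen_isIdealStep_sup (fun J hJ => hJ.sup_of_smodEq hA₂ hmod) hT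
  rw [bot_inf_eq, inf_eq_right.2 hA.1] at hlow
  rw [bot_sup_eq, hTA] at hhigh
  exact hlow.trans hhigh

-- `S` embeds in the quotient of `T ⊔ A` by `A`, which is also a quotient of `T`.
theorem IsSupersolvable.of_smodEq_of_inf_eq_bot (hT : IsSupersolvable m₁ T)
    (hA : IsIdealOf m₂ (T ⊔ A) A) (hmod : ∀ x ∈ T, ∀ y ∈ T, m₁ x y ≡ m₂ x y [SMOD A])
    (hS : IsSubalg m₂ S) (hSTA : S ≤ T ⊔ A) (hAS : A ⊓ S = ⊥) : IsSupersolvable m₂ S := by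
  rw [isSupersolvable_iff_reflTransGen] at hT ⊢
  have hchain := reflTransGen_isIdealStep_inf (fun J hJ => hJ.inf_subalg hS hSTA)
    (reflTransGen_isIdealStep_sup (fun J hJ => hJ.sup_of_smodEq hA hmod) hT)
  rwa [bot_sup_eq, hAS, inf_eq_right.2 hSTA] at hchain

end Supersolvable

/-! ### Minimal ideals and the Frattini ideal -/

theorem exists_isMinIdeal_le [FiniteDimensional F L] (hI : IsIdeal m I) (hne : I ≠ ⊥) :
    ∃ J ≤ I, IsMinIdeal m J := by
  obtain ⟨J, hJI, ⟨hJ, hJne⟩, hJmin⟩ :=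
    exists_minimal_le_of_wellFoundedLT (fun K => IsIdeal m K ∧ K ≠ ⊥) I ⟨hI, hne⟩
  refine ⟨J, hJI, hJ, hJne, fun K hK hKJ => or_iff_not_imp_left.2 fun hKne => ?_⟩
  exact le_antisymm hKJ (hJmin ⟨hK, hKne⟩ hKJ)

theorem IsMinIdeal.inf_eq_bot_of_sup_eq_top (hA : IsMinIdeal m A)
    (hAA : ∀ a ∈ A, ∀ b ∈ A, m a b = 0) (hS : IsSubalg m S) (hSA : S ⊔ A = ⊤) (hne : S ≠ ⊤) :
    A ⊓ S = ⊥ := by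
  have hideal : IsIdeal m (A ⊓ S) := by
    rintro x y ⟨hyA, hyS⟩
    obtain ⟨s, hs, a, ha, rfl⟩ := mem_sup.1 (hSA ▸ mem_top : x ∈ S ⊔ A)
    rw [map_add, map_add, LinearMap.add_apply, hAA a ha y hyA, hAA y hyA a ha, add_zero, add_zero]
    exact ⟨⟨(hA.1 s y hyA).1, hS s hs y hyS⟩, ⟨(hA.1 s y hyA).2, hS y hyS s hs⟩⟩
  refine (hA.2.2 _ hideal inf_le_left).resolve_right fun hAS => hne ?_
  rw [← hSA, sup_eq_left.2 (inf_eq_left.1 hAS)]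

theorem IsMinIdeal.isMaxSubalg_of_isCompl (hA : IsMinIdeal m A)
    (hAA : ∀ a ∈ A, ∀ b ∈ A, m a b = 0) (hS : IsSubalg m S) (hAS : IsCompl A S) :
    IsMaxSubalg m S := by
  refine ⟨hS, fun hST => hA.2.1 (disjoint_top.1 (hST ▸ hAS.disjoint)), fun T hT hST => ?_⟩
  refine or_iff_not_imp_right.2 fun hne => ?_
  have hTA : T ⊔ A = ⊤ := by
    rw [eq_top_iff, ← hAS.sup_eq_top, sup_comm]
    exact sup_le_sup_right hST A
  have hAT : A ⊓ T = ⊥ := hA.inf_eq_bot_of_sup_eq_top hAA hT hTA hne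
  refine (eq_of_le_of_inf_le_of_le_sup (z := A) hST ?_ ?_).symm
  · rw [inf_comm, hAT]
    exact bot_le
  · rw [sup_comm, hAS.sup_eq_top]
    exact le_top

theorem frattiniIdeal_eq_bot_of_isMaxSubalg (hS : IsMaxSubalg m S)
    (hcore : ∀ I, IsIdeal m I → I ≤ S → I = ⊥) : frattiniIdeal m = ⊥ :=
  sSup_eq_bot.2 fun I hI => hcore I hI.1 (hI.2.trans (sInf_le hS))

end Leibniz

/-- `m'` is the multiplication `[a + h, b + k] = hb - ka + hk` of the companion of the algebra
`(L, m)`, for a decomposition `L = A + H` in which `A` is an ideal with `A · L = 0`. -/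
structure IsCompanion {F : Type*} [Field F] {L : Type*} [AddCommGroup L] [Module F L]
    (m m' : L →ₗ[F] L →ₗ[F] L) (A H : Submodule F L) : Prop where
  isIdeal : IsIdeal m A
  mul_eq_zero : ∀ a ∈ A, m a = 0
  codisjoint : Codisjoint A H
  mul_add_add : ∀ a ∈ A, ∀ h ∈ H, ∀ b ∈ A, ∀ k ∈ H, m' (a + h) (b + k) = m h b - m k a + m h k

namespace IsCompanion

variable {F : Type*} [Field F] {L : Type*} [AddCommGroup L] [Module F L]
variable {m m' : L →ₗ[F] L →ₗ[F] L} {A H I J S T : Submodule F L}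

theorem exists_add_eq (hC : IsCompanion m m' A H) (x : L) : ∃ a ∈ A, ∃ h ∈ H, a + h = x :=
  mem_sup.1 (hC.codisjoint.eq_top ▸ mem_top)

theorem mul_add_left (hC : IsCompanion m m' A H) {a : L} (ha : a ∈ A) (h x : L) :
    m (a + h) x = m h x := by
  rw [map_add, hC.mul_eq_zero a ha, zero_add]

theorem companion_mul_of_mem (hC : IsCompanion m m' A H) {h k : L} (hh : h ∈ H) (hk : k ∈ H) :
    m' h k = m h k := by
  simpa using hC.mul_add_add 0 A.zero_mem h hh 0 A.zero_mem k hk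

theorem companion_mul_right (hC : IsCompanion m m' A H) (x : L) {b : L} (hb : b ∈ A) :
    m' x b = m x b := by
  obtain ⟨a, ha, h, hh, rfl⟩ := hC.exists_add_eq x
  rw [hC.mul_add_left ha]
  simpa only [add_zero, map_zero, LinearMap.zero_apply, sub_zero] using
    hC.mul_add_add a ha h hh b hb 0 H.zero_mem

theorem companion_mul_left (hC : IsCompanion m m' A H) {a : L} (ha : a ∈ A) (x : L) :
    m' a x = -m x a := by
  obtain ⟨b, hb, k, hk, rfl⟩ := hC.exists_add_eq x
  rw [hC.mul_add_left hb]
  simpa only [add_zero, map_zero, LinearMap.zero_apply, zero_sub] using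
    hC.mul_add_add a ha 0 H.zero_mem b hb k hk

theorem companion_mul_eq_zero (hC : IsCompanion m m' A H) {a b : L} (ha : a ∈ A) (hb : b ∈ A) :
    m' a b = 0 := by
  rw [hC.companion_mul_right a hb, hC.mul_eq_zero a ha, LinearMap.zero_apply]

theorem smodEq (hC : IsCompanion m m' A H) (x y : L) : m x y ≡ m' x y [SMOD A] := by
  obtain ⟨a, ha, h, hh, rfl⟩ := hC.exists_add_eq x
  obtain ⟨b, hb, k, hk, rfl⟩ := hC.exists_add_eq y
  have hdiff : m (a + h) (b + k) - m' (a + h) (b + k) = m k a := by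
    rw [hC.mul_add_left ha, hC.mul_add_add a ha h hh b hb k hk, map_add]
    abel
  rw [SModEq.sub_mem, hdiff]
  exact (hC.isIdeal k a ha).1

theorem isLie_companion (hC : IsCompanion m m' A H) (hHLie : ∀ h ∈ H, ∀ k ∈ H, m h k = -m k h) :
    IsLie m' := by
  intro x y
  obtain ⟨a, ha, h, hh, rfl⟩ := hC.exists_add_eq x
  obtain ⟨b, hb, k, hk, rfl⟩ := hC.exists_add_eq y
  rw [hC.mul_add_add a ha h hh b hb k hk, hC.mul_add_add b hb k hk a ha h hh, hHLie h hh k hk]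
  abel

theorem isLeibniz_companion (hC : IsCompanion m m' A H) (hm : IsLeibniz m) (hH : IsSubalg m H) :
    IsLeibniz m' := by
  intro x y z
  obtain ⟨a, ha, h, hh, rfl⟩ := hC.exists_add_eq x
  obtain ⟨b, hb, k, hk, rfl⟩ := hC.exists_add_eq y
  obtain ⟨c, hc, l, hl, rfl⟩ := hC.exists_add_eq z
  have mul_mem : ∀ u, ∀ v ∈ A, m u v ∈ A := fun u v hv => (hC.isIdeal u v hv).1
  rw [hC.mul_add_add b hb k hk c hc l hl, hC.mul_add_add a ha h hh b hb k hk,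
    hC.mul_add_add a ha h hh c hc l hl,
    hC.mul_add_add a ha h hh _ (sub_mem (mul_mem k c hc) (mul_mem l b hb)) _ (hH k hk l hl),
    hC.mul_add_add _ (sub_mem (mul_mem h b hb) (mul_mem k a ha)) _ (hH h hh k hk) c hc l hl,
    hC.mul_add_add b hb k hk _ (sub_mem (mul_mem h c hc) (mul_mem l a ha)) _ (hH h hh l hl)]
  simp only [map_sub]
  rw [hm h k c, hm h l b, hm h k l, hm k l a]
  abel

theorem isIdealOf_companion_iff (hC : IsCompanion m m' A H) (hJA : J ≤ A) :
    IsIdealOf m' T J ↔ IsIdealOf m T J := by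
  refine and_congr_right fun _ => forall₄_congr fun x _ y hy => ?_
  rw [hC.companion_mul_right x (hJA hy), hC.companion_mul_left (hJA hy),
    hC.mul_eq_zero y (hJA hy), neg_mem_iff, and_self]
  simp

theorem isIdeal_companion_iff (hC : IsCompanion m m' A H) (hJA : J ≤ A) :
    IsIdeal m' J ↔ IsIdeal m J := by
  rw [← isIdealOf_top_iff, hC.isIdealOf_companion_iff hJA, isIdealOf_top_iff]

theorem isIdeal_companion (hC : IsCompanion m m' A H) : IsIdeal m' A :=
  (hC.isIdeal_companion_iff le_rfl).2 hC.isIdeal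

theorem isMinIdeal_companion (hC : IsCompanion m m' A H) (hA : IsMinIdeal m A) :
    IsMinIdeal m' A :=
  ⟨hC.isIdeal_companion, hA.2.1, fun J hJ hJA => hA.2.2 J ((hC.isIdeal_companion_iff hJA).1 hJ) hJA⟩

theorem isSubalg_companion (hC : IsCompanion m m' A H) (hH : IsSubalg m H) : IsSubalg m' H :=
  fun x hx y hy => (hC.companion_mul_of_mem hx hy).symm ▸ hH x hx y hy

theorem isSolvableAlg_companion (hC : IsCompanion m m' A H) (hsolv : IsSolvableAlg m) :
    IsSolvableAlg m' := by
  have hA : IsSolvableSub m' A :=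
    ⟨1, eq_bot_iff.2 (map₂_le.2 fun a ha b hb =>
      (mem_bot F).2 (hC.companion_mul_eq_zero ha hb))⟩
  exact IsSolvableSub.of_smodEq hsolv hC.isIdeal_companion hA hC.smodEq

theorem isIdeal_of_isIdeal_companion_of_le (hC : IsCompanion m m' A H) (hAH : Disjoint A H)
    (hI : IsIdeal m' I) (hIH : I ≤ H) : IsIdeal m I := by
  intro x y hy
  obtain ⟨a, ha, h, hh, rfl⟩ := hC.exists_add_eq x
  have hya : m y a = 0 := by
    rw [← hC.companion_mul_right y ha]
    exact disjoint_def.1 hAH _ (hC.isIdeal_companion y a ha).1 (hIH (hI a y hy).2)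
  rw [hC.mul_add_left ha, map_add, hya, zero_add, ← hC.companion_mul_of_mem hh (hIH hy),
    ← hC.companion_mul_of_mem (hIH hy) hh]
  exact hI h y hy

theorem isMaxSubalg_companion (hC : IsCompanion m m' A H) (hA : IsMinIdeal m A) (hAH : Disjoint A H)
    (hH : IsSubalg m H) : IsMaxSubalg m' H :=
  (hC.isMinIdeal_companion hA).isMaxSubalg_of_isCompl
    (fun _ ha _ hb => hC.companion_mul_eq_zero ha hb) (hC.isSubalg_companion hH)
    ⟨hAH, hC.codisjoint⟩

section FiniteDimensional

variable [FiniteDimensional F L]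

theorem frattiniIdeal_companion_eq_bot (hC : IsCompanion m m' A H) (hA : IsMinIdeal m A)
    (huniq : ∀ A', IsMinIdeal m A' → A' = A) (hAH : Disjoint A H) (hH : IsSubalg m H) :
    frattiniIdeal m' = ⊥ := by
  refine frattiniIdeal_eq_bot_of_isMaxSubalg (hC.isMaxSubalg_companion hA hAH hH) fun I hI hIH => ?_
  by_contra hne
  obtain ⟨J, hJI, hJ⟩ := exists_isMinIdeal_le (hC.isIdeal_of_isIdeal_companion_of_le hAH hI hIH) hne
  obtain rfl := huniq J hJ
  exact hA.2.1 (hAH.eq_bot_of_le (hJI.trans hIH))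

theorem isSupersolvable_companion_iff (hC : IsCompanion m m' A H) (hAT : A ≤ T) :
    IsSupersolvable m' T ↔ IsSupersolvable m T :=
  ⟨fun hT => hT.of_smodEq (hC.isIdeal_companion.isIdealOf hAT)
      (fun _ hJA => (hC.isIdealOf_companion_iff hJA).1) fun x _ y _ => (hC.smodEq x y).symm,
    fun hT => hT.of_smodEq (hC.isIdeal.isIdealOf hAT)
      (fun _ hJA => (hC.isIdealOf_companion_iff hJA).2) fun x _ y _ => hC.smodEq x y⟩

theorem isSupersolvable_companion_of_ne_top (hC : IsCompanion m m' A H) (hA : IsMinIdeal m A)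
    (hH : IsSupersolvable m H)
    (hproper : ∀ T, IsSubalg m T → T ≠ ⊤ → IsSupersolvable m T)
    (hS : IsSubalg m' S) (hne : S ≠ ⊤) : IsSupersolvable m' S := by
  by_cases hSA : S ⊔ A = ⊤
  · have hHA : H ⊔ A = ⊤ := hC.codisjoint.symm.eq_top
    have hAS : A ⊓ S = ⊥ := (hC.isMinIdeal_companion hA).inf_eq_bot_of_sup_eq_top
      (fun _ ha _ hb => hC.companion_mul_eq_zero ha hb) hS hSA hne
    exact hH.of_smodEq_of_inf_eq_bot (hC.isIdeal_companion.isIdealOf le_sup_right)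
      (fun x _ y _ => hC.smodEq x y) hS (hHA ▸ le_top) hAS
  · have hsub : IsSubalg m (S ⊔ A) := (hS.sup_ideal hC.isIdeal_companion).of_smodEq le_sup_right
      fun x _ y _ => (hC.smodEq x y).symm
    have hsup : IsSupersolvable m' (S ⊔ A) :=
      (hC.isSupersolvable_companion_iff le_sup_right).2 (hproper _ hsub hSA)
    exact hsup.mono hS le_sup_left

end FiniteDimensional

end IsCompanion

/-- Let `L` be a finite-dimensional solvable Leibniz algebra with
`φ(L) = 0` which is minimally non-supersolvable and not a Lie algebra. Write
`L = A + H` with `A` the unique minimal ideal (`A = Leib(L)`) and `H` a complementing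
Lie subalgebra, and let `C` be the companion Lie algebra on the same vector space, with
product `[a+h, b+k] = hb − ka + hk` (given here by the bilinear map `m'`). Then `C` is a
solvable Lie algebra with `φ(C) = 0`, `C` is not supersolvable, and every proper
subalgebra of `C` is supersolvable (so `C` is minimally non-supersolvable). -/
theorem companion_of_minimally_non_supersolvable
    {F : Type*} [Field F] {L : Type*} [AddCommGroup L] [Module F L]
    [FiniteDimensional F L]
    (m : L →ₗ[F] L →ₗ[F] L) (hm : IsLeibniz m)
    (hsolv : IsSolvableAlg m)
    (hphi : frattiniIdeal m = ⊥)
    (hnotsuper : ¬ IsSupersolvable m (⊤ : Submodule F L))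
    (hproper : ∀ S : Submodule F L, IsSubalg m S → S ≠ ⊤ → IsSupersolvable m S)
    (hnotLie : ¬ IsLie m)
    (A H : Submodule F L)
    (hmin : IsMinIdeal m A) (huniq : ∀ A', IsMinIdeal m A' → A' = A)
    (hleib : A = leibIdeal m)
    (hH : IsSubalg m H) (hHLie : ∀ h ∈ H, ∀ k ∈ H, m h k = - m k h)
    (hdisj : A ⊓ H = ⊥) (hsum : A ⊔ H = ⊤)
    (m' : L →ₗ[F] L →ₗ[F] L)
    (hm' : ∀ a ∈ A, ∀ h ∈ H, ∀ b ∈ A, ∀ k ∈ H,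
      m' (a + h) (b + k) = m h b - m k a + m h k) :
    IsLie m' ∧ IsLeibniz m' ∧ IsSolvableAlg m' ∧
    frattiniIdeal m' = ⊥ ∧
    ¬ IsSupersolvable m' (⊤ : Submodule F L) ∧
    (∀ S : Submodule F L, IsSubalg m' S → S ≠ ⊤ → IsSupersolvable m' S) := by
  have hAH : Disjoint A H := disjoint_iff.2 hdisj
  have hC : IsCompanion m m' A H :=
    ⟨hmin.1, fun a ha => mul_eq_zero_of_mem_leibIdeal hm (hleib ▸ ha), codisjoint_iff.2 hsum, hm'⟩
  have hHne : H ≠ ⊤ := (hC.isMaxSubalg_companion hmin hAH hH).2.1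
  exact ⟨hC.isLie_companion hHLie, hC.isLeibniz_companion hm hH, hC.isSolvableAlg_companion hsolv,
    hC.frattiniIdeal_companion_eq_bot hmin huniq hAH hH,
    fun hsuper => hnotsuper ((hC.isSupersolvable_companion_iff le_top).1 hsuper),
    fun _ => hC.isSupersolvable_companion_of_ne_top hmin (hproper H hH hHne) hproper⟩
end

section
/- Let M be a finite-dimensional Leibniz algebra over a field F. Then M is triangulable on itself if and only if M is strongly solvable. -/
/-!
Basic theory of (left) Leibniz algebras, formalized over an arbitrary field `F`.
A Leibniz algebra structure on an `F`-vector space `L` is given by a bilinear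
multiplication `m : L →ₗ[F] L →ₗ[F] L` satisfying the left Leibniz identity.
-/

open Submodule Module

/-!
The left multiplications of a Leibniz algebra `M` form a Lie algebra `𝔤` acting on `M`, and `M²`
maps onto `[𝔤, 𝔤]`. Hence strong solvability of `M` says that `[𝔤, 𝔤]` acts nilpotently on `M`, a
condition which neither improves nor deteriorates under extension of scalars. Over an algebraically
closed field, a Lie algebra `L` acts on `V` by upper triangular matrices exactly when `[L, L]` acts
nilpotently on `V`:

* the diagonal entries of a triangular action are characters of `L`, so that `[L, L]` acts by
  strictly triangular matrices, and Engel's theorem applies;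
* conversely, on an irreducible quotient of `V` the ideal `[L, L]` acts by zero, so `L` acts by
  commuting operators and the quotient is a line; its kernel is an invariant hyperplane, and one
  concludes by induction on `dim V`.
-/

open scoped TensorProduct

section Matrices

variable {R ι : Type*} [CommRing R] [Fintype ι] [LinearOrder ι]

lemma isNilpotent_of_isUpperTriangular_of_diag_eq_zero {A : Matrix ι ι R}
    (hA : A.IsUpperTriangular) (hdiag : ∀ i, A i i = 0) : IsNilpotent A := by
  have hcharpoly : A.charpoly = Polynomial.X ^ Fintype.card ι := by
    simp [Matrix.charpoly_of_isUpperTriangular A hA, hdiag]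
  exact ⟨_, by simpa [hcharpoly] using A.aeval_self_charpoly⟩

lemma mul_apply_self_of_isUpperTriangular {S : Type*} [NonUnitalNonAssocSemiring S]
    {A B : Matrix ι ι S} (hA : A.IsUpperTriangular) (hB : B.IsUpperTriangular) (i : ι) :
    (A * B) i i = A i i * B i i := by
  rw [Matrix.mul_apply]
  refine Finset.sum_eq_single i (fun k _ hk => ?_) (by simp)
  rcases lt_or_gt_of_ne hk with hlt | hgt
  · rw [hA hlt, zero_mul]
  · rw [hB hgt, mul_zero]

lemma isUpperTriangular_toMatrix_iff {V : Type*} [AddCommGroup V] [Module R V]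
    (b : Basis ι R V) (f : Module.End R V) :
    (LinearMap.toMatrix b b f).IsUpperTriangular ↔ ∀ j, f (b j) ∈ span R (b '' Set.Iic j) := by
  simp only [Matrix.BlockTriangular, LinearMap.toMatrix_apply, id, b.mem_span_image,
    Set.subset_def, Finset.mem_coe, Finsupp.mem_support_iff, Set.mem_Iic]
  exact ⟨fun h j i hi => not_lt.mp fun hij => hi (h hij),
    fun h i j hij => by_contra fun hi => hij.not_ge (h j i hi)⟩

end Matrices

section TriangularBasis

attribute [local instance] LieRing.ofAssociativeRing

open LieAlgebra LieModule

/-- The Lie algebra `L` acts on `V` by simultaneously upper triangular matrices. This differs from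
Mathlib's `LieModule.IsTriangularizable`, which asks for each operator to be triangularizable
separately. -/
def HasTriangularBasis (R L V : Type*) [CommRing R] [LieRing L] [LieAlgebra R L] [AddCommGroup V]
    [Module R V] [LieRingModule L V] [LieModule R L V] : Prop :=
  ∃ (n : ℕ) (b : Basis (Fin n) R V),
    ∀ x : L, (LinearMap.toMatrix b b (toEnd R L V x)).IsUpperTriangular

section CommRing

variable {R L V : Type*} [CommRing R] [LieRing L] [LieAlgebra R L] [AddCommGroup V] [Module R V]
  [LieRingModule L V] [LieModule R L V]

/-- The character of `L` given by the `i`-th diagonal entry of a triangular action. -/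
noncomputable def diagCharacter {n : ℕ} (b : Basis (Fin n) R V)
    (hb : ∀ x : L, (LinearMap.toMatrix b b (toEnd R L V x)).IsUpperTriangular) (i : Fin n) :
    LieCharacter R L where
  toFun x := LinearMap.toMatrix b b (toEnd R L V x) i i
  map_add' x y := by simp
  map_smul' c x := by simp
  map_lie' {x y} := by
    simp only [LieHom.map_lie, LieRing.of_associative_ring_bracket, map_sub,
      LinearMap.toMatrix_mul, Matrix.sub_apply, mul_apply_self_of_isUpperTriangular (hb _) (hb _)]

theorem HasTriangularBasis.isNilpotent_derivedSeries_one [IsNoetherianRing R]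
    (h : HasTriangularBasis R L V) : LieModule.IsNilpotent (derivedSeries R L 1) V := by
  obtain ⟨n, b, hb⟩ := h
  have : Module.Finite R V := .of_basis b
  refine (LieModule.isNilpotent_iff_forall' (R := R)).mpr fun ⟨x, hx⟩ => ?_
  rw [← IsNilpotent.map_iff (f := LinearMap.toMatrixAlgEquiv b)
    (LinearMap.toMatrixAlgEquiv b).injective]
  exact isNilpotent_of_isUpperTriangular_of_diag_eq_zero (hb x)
    fun i => lieCharacter_apply_of_mem_derived (diagCharacter b hb i) hx

lemma isNilpotent_lieIdeal_iff_exists_lcs_eq_bot (I : LieIdeal R L) :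
    LieModule.IsNilpotent I V ↔ ∃ k, I.lcs V k = ⊥ := by
  simp only [LieModule.isNilpotent_iff R, ← LieSubmodule.toSubmodule_inj, ← I.coe_lcs_eq,
    LieSubmodule.bot_toSubmodule]

lemma coe_lieIdeal_lie_eq_map₂ (I : LieIdeal R L) (N : LieSubmodule R L V) :
    (⁅I, N⁆ : LieSubmodule R L V).toSubmodule =
      map₂ (toEnd R L V : L →ₗ[R] Module.End R V) I.toSubmodule N.toSubmodule := by
  rw [LieSubmodule.lieIdeal_oper_eq_linear_span', map₂_eq_span_image2]
  rfl

lemma lie_top_eq_bot_of_isIrreducible [IsIrreducible R L V] (I : LieIdeal R L)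
    [LieModule.IsNilpotent I V] : ⁅I, (⊤ : LieSubmodule R L V)⁆ = ⊥ := by
  refine (eq_bot_or_eq_top _).resolve_right fun htop => ?_
  have hlcs : ∀ k, I.lcs V k = ⊤ := fun k => by
    induction k with
    | zero => rfl
    | succ k ih => rw [LieIdeal.lcs_succ, ih, htop]
  obtain ⟨k, hk⟩ := (isNilpotent_lieIdeal_iff_exists_lcs_eq_bot I).mp ‹_›
  exact top_ne_bot ((hlcs k).symm.trans hk)

lemma isIrreducible_quotient_of_isCoatom {U : LieSubmodule R L V} (hU : IsCoatom U) :
    IsIrreducible R L (V ⧸ U) := by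
  have : Nontrivial (V ⧸ U) := Submodule.Quotient.nontrivial_iff.mpr
    fun h => hU.1 ((LieSubmodule.toSubmodule_eq_top U).mp h)
  refine IsIrreducible.mk fun N hN => ?_
  let π := LieSubmodule.Quotient.mk' U
  have hπ : Function.Surjective π := LieSubmodule.Quotient.surjective_mk' U
  have hker : U ≤ N.comap π := fun v hv => by
    rw [LieSubmodule.mem_comap, (LieSubmodule.Quotient.mk_eq_zero U).mpr hv]
    exact N.zero_mem
  have hmap : (N.comap π).map π = N :=
    SetLike.coe_injective (Set.image_preimage_eq _ hπ)
  rcases hU.le_iff.mp hker with htop | heq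
  · rw [← hmap, htop, LieModuleHom.map_top]
    exact LieSubmodule.Quotient.range_mk' U
  · refine absurd ?_ hN
    rw [← hmap, heq]
    exact (LieSubmodule.Quotient.map_mk'_eq_bot_le U U).mpr le_rfl

end CommRing

section Field

variable {K L V : Type*} [Field K] [LieRing L] [LieAlgebra K L] [AddCommGroup V] [Module K V]
  [LieRingModule L V] [LieModule K L V]

lemma exists_lie_eq_smul_of_isIrreducible [IsAlgClosed K] [FiniteDimensional K V]
    [IsIrreducible K L V] [LieModule.IsNilpotent (derivedSeries K L 1) V] (x : L) :
    ∃ c : K, ∀ v : V, ⁅x, v⁆ = c • v := by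
  have := nontrivial_of_isIrreducible K L V
  obtain ⟨c, hc⟩ := Module.End.exists_eigenvalue (toEnd K L V x)
  have hcomm (y : L) (v : V) : ⁅x, ⁅y, v⁆⁆ = ⁅y, ⁅x, v⁆⁆ := by
    have hxy : ⁅x, y⁆ ∈ derivedSeries K L 1 :=
      LieSubmodule.lie_mem_lie (LieSubmodule.mem_top x) (LieSubmodule.mem_top y)
    rw [leibniz_lie, (LieSubmodule.lie_eq_bot_iff ..).mp
      (lie_top_eq_bot_of_isIrreducible (derivedSeries K L 1)) _ hxy v (LieSubmodule.mem_top v),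
      zero_add]
  let E : LieSubmodule K L V :=
    { Module.End.eigenspace (toEnd K L V x) c with
      lie_mem := fun {y v} hv => by
        have hv : ⁅x, v⁆ = c • v := Module.End.mem_eigenspace_iff.mp hv
        exact Module.End.mem_eigenspace_iff.mpr <| by
          rw [toEnd_apply_apply, hcomm, hv, lie_smul] }
  have hE : E = ⊤ := (eq_bot_or_eq_top E).resolve_left fun h =>
    hc (by simpa [E] using congrArg LieSubmodule.toSubmodule h)
  exact ⟨c, fun v => Module.End.mem_eigenspace_iff.mp (hE ▸ LieSubmodule.mem_top v : v ∈ E)⟩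

lemma finrank_eq_one_of_isIrreducible [IsAlgClosed K] [FiniteDimensional K V]
    [IsIrreducible K L V] [LieModule.IsNilpotent (derivedSeries K L 1) V] :
    finrank K V = 1 := by
  have := nontrivial_of_isIrreducible K L V
  obtain ⟨v, hv⟩ := exists_ne (0 : V)
  let W : LieSubmodule K L V :=
    { K ∙ v with
      lie_mem := fun {x w} hw => by
        obtain ⟨c, hc⟩ := exists_lie_eq_smul_of_isIrreducible (K := K) (V := V) x
        rw [hc]
        exact (K ∙ v).smul_mem c hw }
  have hvW : v ∈ W := mem_span_singleton_self v
  have hW : W = ⊤ := (eq_bot_or_eq_top W).resolve_left fun h =>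
    hv ((LieSubmodule.eq_bot_iff W).mp h v hvW)
  exact finrank_eq_one_iff_of_nonzero v hv |>.mpr (congrArg LieSubmodule.toSubmodule hW)

lemma HasTriangularBasis.of_lieSubmodule {U : LieSubmodule K L V} (hU : finrank K (V ⧸ U) = 1)
    (h : HasTriangularBasis K L U) : HasTriangularBasis K L V := by
  obtain ⟨n, b, hb⟩ := h
  have := Module.nontrivial_of_finrank_eq_succ hU
  obtain ⟨q, hq⟩ := exists_ne (0 : V ⧸ U)
  obtain ⟨y, rfl⟩ := LieSubmodule.Quotient.surjective_mk' U q
  have hli (c : K) (u : V) (hu : u ∈ U) (h : c • y + u = 0) : c = 0 := by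
    by_contra hc
    have hy : c • y ∈ U := eq_neg_of_add_eq_zero_left h ▸ U.neg_mem hu
    exact hq ((LieSubmodule.Quotient.mk_eq_zero U).mpr ((U.toSubmodule.smul_mem_iff hc).mp hy))
  have hsp (z : V) : ∃ c : K, z + c • y ∈ U := by
    obtain ⟨c, hc⟩ := (finrank_eq_one_iff_of_nonzero' _ hq).mp hU (LieSubmodule.Quotient.mk' U (-z))
    refine ⟨c, (LieSubmodule.Quotient.mk_eq_zero U).mp ?_⟩
    rw [map_add, map_smul, hc, map_neg, add_neg_cancel]
  let B := Basis.mkFinSnoc (N := U.toSubmodule) b y hli hsp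
  have hB : ⇑B = Fin.snoc (fun j => (b j : V)) y := Basis.coe_mkFinSnoc ..
  refine ⟨n + 1, B, fun x => (isUpperTriangular_toMatrix_iff B _).mpr fun j => ?_⟩
  induction j using Fin.lastCases with
  | last =>
    have hIic : Set.Iic (Fin.last n) = Set.univ := Set.Iic_top
    rw [hIic, Set.image_univ, B.span_eq]
    exact mem_top
  | cast j =>
    have hspan : U.toSubmodule.subtype (toEnd K L U x (b j)) ∈
        span K (B '' Set.Iic j.castSucc) := by
      refine span_mono ?_ ((span_image _).ge
        (mem_map_of_mem ((isUpperTriangular_toMatrix_iff b _).mp (hb x) j)))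
      rintro _ ⟨_, ⟨i, hi, rfl⟩, rfl⟩
      exact ⟨i.castSucc, Fin.castSucc_le_castSucc_iff.mpr hi, by simp [hB]⟩
    simpa [hB] using hspan

theorem hasTriangularBasis_of_isNilpotent_derivedSeries_one [IsAlgClosed K]
    [FiniteDimensional K V] [LieModule.IsNilpotent (derivedSeries K L 1) V] :
    HasTriangularBasis K L V := by
  induction h : finrank K V generalizing V with
  | zero => exact ⟨0, finBasisOfFinrankEq K V h, fun x i => i.elim0⟩
  | succ n ih =>
    have := Module.nontrivial_of_finrank_eq_succ h
    obtain ⟨U, hU⟩ := IsCoatomic.exists_coatom (LieSubmodule K L V)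
    have := isIrreducible_quotient_of_isCoatom hU
    have : LieModule.IsNilpotent (derivedSeries K L 1) (V ⧸ U) :=
      Function.surjective_id.lieModuleIsNilpotent
        (f := LieHom.id) (g := (LieSubmodule.Quotient.mk' U : V →ₗ[K] V ⧸ U)) (fun _ _ => rfl)
        (LieSubmodule.Quotient.surjective_mk' U)
    have : LieModule.IsNilpotent (derivedSeries K L 1) U :=
      U.injective_incl.lieModuleIsNilpotent
        (f := LieHom.id) (g := (U.incl : U →ₗ[K] V)) (fun _ _ => rfl)
    have hline : finrank K (V ⧸ U) = 1 := finrank_eq_one_of_isIrreducible (L := L)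
    have hUn : finrank K U = n := by
      have := U.toSubmodule.finrank_quotient_add_finrank
      have : finrank K (V ⧸ U) + finrank K U = finrank K V := this
      omega
    exact .of_lieSubmodule hline (ih hUn)

theorem hasTriangularBasis_iff_isNilpotent_derivedSeries_one [IsAlgClosed K]
    [FiniteDimensional K V] :
    HasTriangularBasis K L V ↔ LieModule.IsNilpotent (derivedSeries K L 1) V :=
  ⟨fun h => h.isNilpotent_derivedSeries_one,
    fun _ => hasTriangularBasis_of_isNilpotent_derivedSeries_one⟩

end Field

section BaseChange

variable {R L V : Type*} (A : Type*) [CommRing R] [CommRing A] [Algebra R A] [LieRing L]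
  [LieAlgebra R L] [AddCommGroup V] [Module R V] [LieRingModule L V] [LieModule R L V]

lemma lcs_baseChange (I : LieIdeal R L) (k : ℕ) :
    LieIdeal.lcs (I.baseChange A) (A ⊗[R] V) k = (I.lcs V k).baseChange A := by
  induction k with
  | zero => exact (LieSubmodule.baseChange_top ..).symm
  | succ k ih => rw [LieIdeal.lcs_succ, LieIdeal.lcs_succ, ih, LieSubmodule.lie_baseChange]

lemma isNilpotent_baseChange_iff [Module.FaithfullyFlat R A] (I : LieIdeal R L) :
    LieModule.IsNilpotent (I.baseChange A) (A ⊗[R] V) ↔ LieModule.IsNilpotent I V := by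
  simp only [isNilpotent_lieIdeal_iff_exists_lcs_eq_bot, lcs_baseChange]
  refine exists_congr fun k => ?_
  rw [← LieSubmodule.baseChange_bot, ← LieSubmodule.toSubmodule_inj, LieSubmodule.coe_baseChange,
    LieSubmodule.coe_baseChange, Submodule.baseChange_inj, LieSubmodule.toSubmodule_inj]

lemma hasTriangularBasis_baseChange_iff :
    HasTriangularBasis A (A ⊗[R] L) (A ⊗[R] V) ↔
      ∃ (n : ℕ) (b : Basis (Fin n) A (A ⊗[R] V)), ∀ x : L,
        (LinearMap.toMatrix b b ((toEnd R L V x).baseChange A)).IsUpperTriangular := by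
  refine exists_congr fun n => exists_congr fun b => ⟨fun h x => ?_, fun h z => ?_⟩
  · simpa only [toEnd_baseChange] using h (1 ⊗ₜ x)
  · induction z with
    | zero => simp
    | add z w hz hw => simpa using hz.add hw
    | tmul a x =>
      rw [← mul_one a, ← smul_eq_mul, ← TensorProduct.smul_tmul', map_smul, toEnd_baseChange,
        map_smul]
      exact fun i j hij => by simp [h x hij]

end BaseChange

section LeftMultiplication

variable {F M : Type*} [Field F] [AddCommGroup M] [Module F M] {m : M →ₗ[F] M →ₗ[F] M}

lemma isNilpotentSub_iff_exists_iterate_top_eq_bot {N : Submodule F M} (hN : mprod m N ⊤ ≤ N) :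
    IsNilpotentSub m N ↔ ∃ k, (mprod m N)^[k] ⊤ = ⊥ := by
  have hmono : Monotone (mprod m N) := fun _ _ => map₂_le_map₂_right
  have hlcs (k : ℕ) : lcSeries m N k = (mprod m N)^[k] N := by
    induction k with
    | zero => rfl
    | succ k ih => rw [lcSeries, ih, Function.iterate_succ_apply']
  simp only [IsNilpotentSub, hlcs]
  constructor
  · rintro ⟨k, hk⟩
    exact ⟨k + 1, le_bot_iff.mp ((hmono.iterate k hN).trans hk.le)⟩
  · rintro ⟨k, hk⟩
    exact ⟨k, le_bot_iff.mp ((hmono.iterate k le_top).trans hk.le)⟩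

lemma lie_leftMul (hm : IsLeibniz m) (x y : M) :
    ⁅(m x : Module.End F M), (m y : Module.End F M)⁆ = m (m x y) := by
  ext z
  simp [LieRing.of_associative_ring_bracket, hm x y z]

/-- The Lie algebra of left multiplications of the Leibniz algebra `(M, m)`. -/
def leftMulLieSubalgebra (hm : IsLeibniz m) : LieSubalgebra F (Module.End F M) where
  toSubmodule := LinearMap.range m
  lie_mem' := by
    rintro _ _ ⟨x, rfl⟩ ⟨y, rfl⟩
    exact ⟨m x y, (lie_leftMul hm x y).symm⟩

/-- The map `x ↦ m x` onto the Lie algebra of left multiplications. It is only linear: `M` carries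
no Lie bracket. -/
def toLeftMul (hm : IsLeibniz m) : M →ₗ[F] leftMulLieSubalgebra hm := m.rangeRestrict

lemma map_toLeftMul_mprod_top (hm : IsLeibniz m) :
    (mprod m ⊤ ⊤).map (toLeftMul hm) =
      (derivedSeries F (leftMulLieSubalgebra hm) 1).toSubmodule := by
  have hrange : (⊤ : Submodule F M).map (toLeftMul hm) = ⊤ := by
    rw [← LinearMap.range_eq_map]
    exact m.range_rangeRestrict
  have hderived : derivedSeries F (leftMulLieSubalgebra hm) 1 = ⁅⊤, ⊤⁆ := rfl
  rw [hderived, coe_lieIdeal_lie_eq_map₂,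
    LieSubmodule.top_toSubmodule, ← hrange, map₂_map_map, mprod, map_map₂]
  congr 1
  ext x y : 3
  exact (lie_leftMul hm x y).symm

lemma coe_lie_derivedSeries_one (hm : IsLeibniz m)
    (N : LieSubmodule F (leftMulLieSubalgebra hm) M) :
    (⁅derivedSeries F (leftMulLieSubalgebra hm) 1, N⁆ : LieSubmodule F _ M).toSubmodule =
      mprod m (mprod m ⊤ ⊤) N.toSubmodule := by
  rw [coe_lieIdeal_lie_eq_map₂, ← map_toLeftMul_mprod_top, map₂_map_left]
  rfl

lemma coe_lcs_derivedSeries_one (hm : IsLeibniz m) (k : ℕ) :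
    ((derivedSeries F (leftMulLieSubalgebra hm) 1).lcs M k).toSubmodule =
      (mprod m (mprod m ⊤ ⊤))^[k] ⊤ := by
  induction k with
  | zero => rfl
  | succ k ih =>
    rw [LieIdeal.lcs_succ, coe_lie_derivedSeries_one, ih, Function.iterate_succ_apply']

theorem isStronglySolvable_top_iff_isNilpotent_derivedSeries_one (hm : IsLeibniz m) :
    IsStronglySolvable m ⊤ ↔
      LieModule.IsNilpotent (derivedSeries F (leftMulLieSubalgebra hm) 1) M := by
  rw [isNilpotent_lieIdeal_iff_exists_lcs_eq_bot, IsStronglySolvable,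
    isNilpotentSub_iff_exists_iterate_top_eq_bot (map₂_le_map₂_left le_top)]
  simp only [← coe_lcs_derivedSeries_one hm, LieSubmodule.toSubmodule_eq_bot]

theorem isTriangulableOn_top_iff_hasTriangularBasis (hm : IsLeibniz m) :
    IsTriangulableOn m ⊤ ↔ HasTriangularBasis (AlgebraicClosure F)
      (AlgebraicClosure F ⊗[F] leftMulLieSubalgebra hm) (AlgebraicClosure F ⊗[F] M) := by
  rw [hasTriangularBasis_baseChange_iff]
  refine exists_congr fun n => exists_congr fun b => ⟨?_, fun h x _ i j hij => ?_⟩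
  · rintro h ⟨_, x, rfl⟩ i j hij
    exact h x mem_top i j hij
  · exact h (toLeftMul hm x) hij

end LeftMultiplication

end TriangularBasis

/-- A finite-dimensional Leibniz algebra `M` is triangulable on itself
if and only if `M` is strongly solvable. -/
theorem triangulable_iff_strongly_solvable
    {F : Type*} [Field F] {M : Type*} [AddCommGroup M] [Module F M]
    [FiniteDimensional F M]
    (m : M →ₗ[F] M →ₗ[F] M) (hm : IsLeibniz m) :
    IsTriangulableOn m (⊤ : Submodule F M) ↔
      IsStronglySolvable m (⊤ : Submodule F M) := by
  let K := AlgebraicClosure F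
  let 𝔤 := leftMulLieSubalgebra hm
  calc IsTriangulableOn m ⊤
    _ ↔ HasTriangularBasis K (K ⊗[F] 𝔤) (K ⊗[F] M) :=
      isTriangulableOn_top_iff_hasTriangularBasis hm
    _ ↔ LieModule.IsNilpotent (LieAlgebra.derivedSeries K (K ⊗[F] 𝔤) 1) (K ⊗[F] M) :=
      hasTriangularBasis_iff_isNilpotent_derivedSeries_one
    _ ↔ LieModule.IsNilpotent (LieAlgebra.derivedSeries F 𝔤 1) M := by
      rw [LieAlgebra.derivedSeries_baseChange, isNilpotent_baseChange_iff]
    _ ↔ IsStronglySolvable m ⊤ :=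
      (isStronglySolvable_top_iff_isNilpotent_derivedSeries_one hm).symm
end
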